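/- arXiv:1903.00207 — 8 statements merged into one kernel-verified Lean document; each statement's English description precedes it below -/
import Mathlib

section
/- For every natural number n ≥ 1, the Laguerre-type Vandermonde integral evaluates as ∫_{(0,∞)^n} (∏_{a=1}^{n} e^{−w_a}) · (∏_{1≤a<b≤n} (w_a − w_b)²) dw₁⋯dw_n = ∏_{j=1}^{n} j! · (j−1)!. -/
open MeasureTheory

theorem aux_integrable (k : ℕ) :
    Integrable (fun x : ℝ => Real.exp (-x) * x ^ k) (volume.restrict (Set.Ioi 0)) := by
  have h := Real.GammaIntegral_convergent (s := (k : ℝ) + 1) (by positivity)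
  simpa [IntegrableOn] using h

theorem aux_integral (k : ℕ) :
    ∫ x : ℝ in Set.Ioi 0, Real.exp (-x) * x ^ k = (Nat.factorial k : ℝ) := by
  have h := Real.Gamma_eq_integral (s := (k : ℝ) + 1) (by positivity)
  rw [Real.Gamma_nat_eq_factorial] at h
  rw [h]
  simp

theorem aux_hankel (m : ℕ) :
    (Matrix.of fun i j : Fin (m + 1) => (Nat.factorial ((i : ℕ) + (j : ℕ)) : ℝ)).det =
      (∏ i ∈ Finset.range (m + 1), (Nat.factorial i : ℝ)) * (Nat.superFactorial m : ℝ) := by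
  have h := Matrix.det_eval_matrixOfPolynomials_eq_det_vandermonde
    (fun i : Fin (m + 1) => ((i : ℕ) : ℝ) + 1) (fun j => ascPochhammer ℝ (j : ℕ))
    (fun j => ascPochhammer_natDegree _ _) (fun j => monic_ascPochhammer _ _)
  rw [Matrix.det_vandermonde_add, Matrix.det_vandermonde_id_eq_superFactorial] at h
  rw [h, ← Fin.prod_univ_eq_prod_range (fun i => (Nat.factorial i : ℝ)), ← Matrix.det_mul_column]
  congr 1
  ext i j
  simp only [Matrix.of_apply]
  rw [← Nat.factorial_mul_ascFactorial, Nat.cast_mul, ← ascPochhammer_nat_eq_ascFactorial,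
    ascPochhammer_eval_cast]
  simp

theorem aux_vander (n : ℕ) (w : Fin n → ℝ) :
    ∏ p ∈ Finset.univ.filter (fun p : Fin n × Fin n => p.1 < p.2), (w p.1 - w p.2) ^ 2 =
      (Matrix.vandermonde w).det ^ 2 := by
  rw [Matrix.det_vandermonde, ← Finset.prod_pow, Finset.prod_filter, Fintype.prod_prod_type]
  refine Finset.prod_congr rfl fun i _ => ?_
  rw [← Finset.prod_pow, ← Finset.prod_filter]
  refine Finset.prod_congr ?_ fun j _ => by ring
  ext j
  simp

/-- The Laguerre-type Vandermonde integral: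
`∫_{(0,∞)ⁿ} ∏ₐ e^{-wₐ} ∏_{a<b} (wₐ - w_b)² dw = ∏_{j=1}^n j!·(j-1)!`. -/
theorem laguerre_vandermonde_integral (n : ℕ) (hn : 1 ≤ n) :
    (∫ w in {w : Fin n → ℝ | ∀ a, 0 < w a},
        (∏ a, Real.exp (-(w a))) *
          ∏ p ∈ Finset.univ.filter (fun p : Fin n × Fin n => p.1 < p.2),
            (w p.1 - w p.2) ^ 2) =
      ∏ j ∈ Finset.Icc 1 n, ((Nat.factorial j : ℝ) * (Nat.factorial (j - 1) : ℝ)) := by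
  obtain ⟨m, rfl⟩ : ∃ m, n = m + 1 := ⟨n - 1, by omega⟩
  have hset : {w : Fin (m + 1) → ℝ | ∀ a, 0 < w a} =
      Set.univ.pi fun _ => Set.Ioi (0 : ℝ) := by
    ext w; simp
  have hexp : ∀ w : Fin (m + 1) → ℝ, (∏ a, Real.exp (-(w a))) *
          ∏ p ∈ Finset.univ.filter (fun p : Fin (m + 1) × Fin (m + 1) => p.1 < p.2),
            (w p.1 - w p.2) ^ 2 =
      ∑ τ : Equiv.Perm (Fin (m + 1)), ∑ σ : Equiv.Perm (Fin (m + 1)),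
        (((Equiv.Perm.sign τ : ℤ) : ℝ) * ((Equiv.Perm.sign σ : ℤ) : ℝ)) *
          ∏ a, (Real.exp (-(w a)) * (w a) ^ ((σ a : ℕ) + (τ a : ℕ))) := by
    intro w
    rw [aux_vander, sq, ← Matrix.det_transpose, Matrix.det_apply', Finset.sum_mul_sum,
      Finset.mul_sum]
    refine Finset.sum_congr rfl fun τ _ => ?_
    rw [Finset.mul_sum]
    refine Finset.sum_congr rfl fun σ _ => ?_
    simp only [Matrix.transpose_apply, Matrix.vandermonde_apply, pow_add,
      Finset.prod_mul_distrib]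
    ring
  simp_rw [hexp]
  rw [hset, volume_pi, Measure.restrict_pi_pi]
  have hint : ∀ τ σ : Equiv.Perm (Fin (m + 1)), Integrable (fun w : Fin (m + 1) → ℝ =>
      (((Equiv.Perm.sign τ : ℤ) : ℝ) * ((Equiv.Perm.sign σ : ℤ) : ℝ)) *
          ∏ a, (Real.exp (-(w a)) * (w a) ^ ((σ a : ℕ) + (τ a : ℕ))))
      (Measure.pi fun _ => volume.restrict (Set.Ioi (0 : ℝ))) := by
    intro τ σ
    refine Integrable.const_mul ?_ _
    exact Integrable.fintype_prod
      (f := fun a x => Real.exp (-x) * x ^ ((σ a : ℕ) + (τ a : ℕ))) fun a => aux_integrable _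
  rw [integral_finsetSum _ fun τ _ => integrable_finsetSum _ fun σ _ => hint τ σ]
  have hτ : ∀ τ : Equiv.Perm (Fin (m + 1)),
      ∫ w : Fin (m + 1) → ℝ, ∑ σ : Equiv.Perm (Fin (m + 1)),
        (((Equiv.Perm.sign τ : ℤ) : ℝ) * ((Equiv.Perm.sign σ : ℤ) : ℝ)) *
          ∏ a, (Real.exp (-(w a)) * (w a) ^ ((σ a : ℕ) + (τ a : ℕ)))
        ∂(Measure.pi fun _ => volume.restrict (Set.Ioi (0 : ℝ))) =
      (∏ i ∈ Finset.range (m + 1), (Nat.factorial i : ℝ)) * (Nat.superFactorial m : ℝ) := by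
    intro τ
    rw [integral_finsetSum _ fun σ _ => hint τ σ, ← aux_hankel]
    have h2 : ∀ σ : Equiv.Perm (Fin (m + 1)), ∫ w : Fin (m + 1) → ℝ,
        (((Equiv.Perm.sign τ : ℤ) : ℝ) * ((Equiv.Perm.sign σ : ℤ) : ℝ)) *
          ∏ a, (Real.exp (-(w a)) * (w a) ^ ((σ a : ℕ) + (τ a : ℕ)))
        ∂(Measure.pi fun _ => volume.restrict (Set.Ioi (0 : ℝ))) =
        ((Equiv.Perm.sign τ : ℤ) : ℝ) * (((Equiv.Perm.sign σ : ℤ) : ℝ) *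
          ∏ a, (Nat.factorial ((σ a : ℕ) + (τ a : ℕ)) : ℝ)) := by
      intro σ
      rw [integral_const_mul, integral_fintype_prod_eq_prod
        (fun a x => Real.exp (-x) * x ^ ((σ a : ℕ) + (τ a : ℕ)))]
      simp_rw [aux_integral]
      ring
    simp_rw [h2]
    rw [← Finset.mul_sum]
    have h3 := Matrix.det_permute' τ
      (Matrix.of fun i j : Fin (m + 1) => (Nat.factorial ((i : ℕ) + (j : ℕ)) : ℝ))
    rw [Matrix.det_apply'] at h3
    simp only [Matrix.submatrix_apply, Matrix.of_apply, id] at h3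
    rw [h3, ← mul_assoc]
    have h4 : ((Equiv.Perm.sign τ : ℤ) : ℝ) * ((Equiv.Perm.sign τ : ℤ) : ℝ) = 1 := by
      rcases Int.units_eq_one_or (Equiv.Perm.sign τ) with h | h <;> simp [h]
    rw [h4, one_mul]
  simp_rw [hτ]
  rw [Finset.sum_const, Finset.card_univ, Fintype.card_perm, Fintype.card_fin, nsmul_eq_mul,
    Finset.prod_mul_distrib]
  have h5 : ∏ j ∈ Finset.Icc 1 (m + 1), (Nat.factorial j : ℝ) =
      (Nat.factorial (m + 1) : ℝ) * (Nat.superFactorial m : ℝ) := by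
    rw [← Nat.cast_prod, Nat.prod_Icc_factorial, Nat.superFactorial_succ, Nat.cast_mul]
  have h6 : ∏ j ∈ Finset.Icc 1 (m + 1), (Nat.factorial (j - 1) : ℝ) =
      ∏ i ∈ Finset.range (m + 1), (Nat.factorial i : ℝ) := by
    rw [Finset.range_eq_Ico, Finset.prod_Ico_eq_prod_range, ← Finset.Ico_add_one_right_eq_Icc,
      Finset.prod_Ico_eq_prod_range]
    simp
  rw [h5, h6]
  ring
end

section
/- Let ζ ∈ (0,π) with sin(2ζ) ≠ 0, and define F(ν₁,ν₂,ν₃) = ∏_{a≠b, a,b∈{1,2,3}} sinh(ν_a − ν_b) / sinh(ν_a − ν_b − iζ). Fix ν₁, ν₂ ∈ ℂ and set ν₁₂ = ν₁ − ν₂, assuming ν₁₂ ∉ iπℤ, ν₁₂ − iζ ∉ iπℤ, ν₁₂ + iζ ∉ iπℤ, and ν₁₂ + 2iζ ∉ iπℤ. Then lim_{ν₃ → ν₂ − iζ} (ν₃ − ν₂ + iζ)·F(ν₁,ν₂,ν₃) = −i · (sin²(ζ)/sin(2ζ)) · sinh(ν₁₂)·sinh(ν₁₂ + iζ) / (sinh(ν₁₂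 − iζ)·sinh(ν₁₂ + 2iζ)). -/
open Topology

/-- Residue reduction of the three-particle kernel
`F(ν₁,ν₂,ν₃) = ∏_{a≠b} sinh(νₐ-ν_b)/sinh(νₐ-ν_b-iζ)` at `ν₃ = ν₂ - iζ`:
`lim_{ν₃→ν₂-iζ} (ν₃-ν₂+iζ)·F = -i·(sin²ζ/sin 2ζ)·sinh(ν₁₂)sinh(ν₁₂+iζ)/(sinh(ν₁₂-iζ)sinh(ν₁₂+2iζ))`. -/
theorem three_particle_residue_reduction (ζ : ℝ) (hζ : ζ ∈ Set.Ioo 0 Real.pi)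
    (hs : Real.sin (2 * ζ) ≠ 0) (F : ℂ → ℂ → ℂ → ℂ)
    (hF : ∀ ν₁ ν₂ ν₃ : ℂ, F ν₁ ν₂ ν₃ =
      (Complex.sinh (ν₁ - ν₂) / Complex.sinh (ν₁ - ν₂ - Complex.I * (ζ : ℂ))) *
      (Complex.sinh (ν₂ - ν₁) / Complex.sinh (ν₂ - ν₁ - Complex.I * (ζ : ℂ))) *
      (Complex.sinh (ν₁ - ν₃) / Complex.sinh (ν₁ - ν₃ - Complex.I * (ζ : ℂ))) *
      (Complex.sinh (ν₃ - ν₁) / Complex.sinh (ν₃ - ν₁ - Complex.I * (ζ : ℂ))) *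
      (Complex.sinh (ν₂ - ν₃) / Complex.sinh (ν₂ - ν₃ - Complex.I * (ζ : ℂ))) *
      (Complex.sinh (ν₃ - ν₂) / Complex.sinh (ν₃ - ν₂ - Complex.I * (ζ : ℂ))))
    (ν₁ ν₂ : ℂ)
    (h1 : ∀ k : ℤ, ν₁ - ν₂ ≠ Complex.I * (Real.pi : ℂ) * (k : ℂ))
    (h2 : ∀ k : ℤ, ν₁ - ν₂ - Complex.I * (ζ : ℂ) ≠ Complex.I * (Real.pi : ℂ) * (k : ℂ))
    (h3 : ∀ k : ℤ, ν₁ - ν₂ + Complex.I * (ζ : ℂ) ≠ Complex.I * (Real.pi : ℂ) * (k : ℂ))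
    (h4 : ∀ k : ℤ, ν₁ - ν₂ + 2 * Complex.I * (ζ : ℂ) ≠ Complex.I * (Real.pi : ℂ) * (k : ℂ)) :
    Filter.Tendsto (fun ν₃ : ℂ => (ν₃ - ν₂ + Complex.I * (ζ : ℂ)) * F ν₁ ν₂ ν₃)
      (𝓝[≠] (ν₂ - Complex.I * (ζ : ℂ)))
      (𝓝 (-Complex.I * ((Real.sin ζ ^ 2 / Real.sin (2 * ζ) : ℝ) : ℂ) *
        (Complex.sinh (ν₁ - ν₂) * Complex.sinh (ν₁ - ν₂ + Complex.I * (ζ : ℂ))) /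
        (Complex.sinh (ν₁ - ν₂ - Complex.I * (ζ : ℂ)) *
          Complex.sinh (ν₁ - ν₂ + 2 * Complex.I * (ζ : ℂ))))) := by
  have hne : ∀ z : ℂ, (∀ k : ℤ, z ≠ Complex.I * (Real.pi : ℂ) * (k : ℂ)) → Complex.sinh z ≠ 0 := by
    intro z hz h
    have h' : Complex.sin (z * Complex.I) = 0 := by rw [Complex.sin_mul_I, h, zero_mul]
    obtain ⟨k, hk⟩ := Complex.sin_eq_zero_iff.1 h'
    apply hz (-k)
    push_cast
    linear_combination (-Complex.I) * hk + z * Complex.I_sq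
  have e1 := hne _ h1
  have e2 := hne _ h2
  have e3 := hne _ h3
  have e4 := hne _ h4
  have hsC : Complex.sin (2 * (ζ : ℂ)) ≠ 0 := by exact_mod_cast hs
  have hc : Complex.sinh (Complex.I * ζ) = Complex.sin ζ * Complex.I := by
    rw [mul_comm, Complex.sinh_mul_I]
  have hc2 : Complex.sinh (2 * Complex.I * ζ) = Complex.sin (2 * ζ) * Complex.I := by
    rw [← Complex.sinh_mul_I]; congr 1; ring
  have e5 : Complex.sinh (2 * Complex.I * ζ) ≠ 0 := by
    rw [hc2]; exact mul_ne_zero hsC Complex.I_ne_zero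
  set p : ℂ := ν₂ - Complex.I * (ζ : ℂ) with hp
  -- the singular factor
  have hsing : Filter.Tendsto (fun x : ℂ => (x - ν₂ + Complex.I * ζ) /
      Complex.sinh (ν₂ - x - Complex.I * ζ)) (𝓝[≠] p) (𝓝 (-1)) := by
    have hd : HasDerivAt (fun x : ℂ => Complex.sinh (x - p)) 1 p := by
      have := ((hasDerivAt_id p).sub_const p).csinh
      simpa using this
    have ht := (hasDerivAt_iff_tendsto_slope.1 hd).inv₀ one_ne_zero
    have ht' := ht.neg
    rw [inv_one] at ht'
    refine ht'.congr fun x => ?_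
    have : ν₂ - x - Complex.I * ζ = -(x - p) := by rw [hp]; ring
    rw [this, Complex.sinh_neg, slope_def_field, sub_self, Complex.sinh_zero, sub_zero, inv_div,
      div_neg, hp]
    congr 2; ring
  have a1 : ν₁ - p = ν₁ - ν₂ + Complex.I * ζ := by rw [hp]; ring
  have a2 : ν₁ - p - Complex.I * ζ = ν₁ - ν₂ := by rw [hp]; ring
  have a3 : p - ν₁ = -(ν₁ - ν₂ + Complex.I * ζ) := by rw [hp]; ring
  have a4 : p - ν₁ - Complex.I * ζ = -(ν₁ - ν₂ + 2 * Complex.I * ζ) := by rw [hp]; ring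
  have a5 : ν₂ - p = Complex.I * ζ := by rw [hp]; ring
  have a6 : p - ν₂ = -(Complex.I * ζ) := by rw [hp]; ring
  have a7 : p - ν₂ - Complex.I * ζ = -(2 * Complex.I * ζ) := by rw [hp]; ring
  have a8 : ν₂ - ν₁ = -(ν₁ - ν₂) := by ring
  have a9 : ν₂ - ν₁ - Complex.I * ζ = -(ν₁ - ν₂ + Complex.I * ζ) := by ring
  have cs : ∀ {f : ℂ → ℂ}, Continuous f → ContinuousAt (fun x => Complex.sinh (f x)) p :=
    fun hf => (Complex.continuous_sinh.comp hf).continuousAt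
  have hG : ContinuousAt (fun x : ℂ =>
      (Complex.sinh (ν₁ - ν₂) / Complex.sinh (ν₁ - ν₂ - Complex.I * (ζ : ℂ))) *
      (Complex.sinh (ν₂ - ν₁) / Complex.sinh (ν₂ - ν₁ - Complex.I * (ζ : ℂ))) *
      (Complex.sinh (ν₁ - x) / Complex.sinh (ν₁ - x - Complex.I * (ζ : ℂ))) *
      (Complex.sinh (x - ν₁) / Complex.sinh (x - ν₁ - Complex.I * (ζ : ℂ))) *
      Complex.sinh (ν₂ - x) *
      (Complex.sinh (x - ν₂) / Complex.sinh (x - ν₂ - Complex.I * (ζ : ℂ)))) p := by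
    refine ((((continuousAt_const.mul ?_).mul ?_).mul (cs (by fun_prop))).mul ?_)
    · exact (cs (by fun_prop)).div (cs (by fun_prop)) (by rw [a2]; exact e1)
    · exact (cs (by fun_prop)).div (cs (by fun_prop))
        (by rw [a4, Complex.sinh_neg]; exact neg_ne_zero.2 e4)
    · exact (cs (by fun_prop)).div (cs (by fun_prop))
        (by rw [a7, Complex.sinh_neg]; exact neg_ne_zero.2 e5)
  have hmain := (hG.tendsto.mono_left (nhdsWithin_le_nhds (s := {p}ᶜ))).mul hsing
  convert hmain using 1
  · funext x
    rw [hF]; ring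
  · congr 1
    rw [a2, a4, a7, a1, a3, a5, a6, a9, a8]
    simp only [Complex.sinh_neg, hc, hc2]
    push_cast
    have hI := Complex.I_ne_zero
    field_simp
    try ring_nf
    try simp only [Complex.I_sq]
    try ring_nf
end

section
/- Let ζ ∈ (0,π) and σ ∈ {0,1}. The Suzuki–Takahashi conditions for a 4-string, namely (−1)^σ · sin(kζ) · sin((4−k)ζ) > 0 for all k = 1, 2, 3, hold if and only if σ = 0 and ζ ∈ (0, π/3) ∪ (2π/3, π). In particular, they never hold with σ = 1. -/
/-- Suzuki–Takahashi conditions for a 4-string: `(-1)^σ·sin(kζ)·sin((4-k)ζ) > 0`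
for `k = 1, 2, 3` holds iff `σ = 0` and `ζ ∈ (0, π/3) ∪ (2π/3, π)`. -/
theorem suzuki_takahashi_four_string (ζ : ℝ) (hζ : ζ ∈ Set.Ioo 0 Real.pi)
    (σ : ℕ) (hσ : σ = 0 ∨ σ = 1) :
    (∀ k : ℕ, 1 ≤ k → k ≤ 3 →
        0 < (-1 : ℝ) ^ σ * Real.sin ((k : ℝ) * ζ) * Real.sin ((4 - (k : ℝ)) * ζ)) ↔
      σ = 0 ∧ ζ ∈ Set.Ioo 0 (Real.pi / 3) ∪ Set.Ioo (2 * Real.pi / 3) Real.pi := by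
  obtain ⟨h0, h1⟩ := hζ
  have hs : 0 < Real.sin ζ := Real.sin_pos_of_pos_of_lt_pi h0 h1
  constructor
  · intro h
    have e1 := h 1 (by norm_num) (by norm_num)
    have e2 := h 2 (by norm_num) (by norm_num)
    norm_num at e1 e2
    rcases hσ with rfl | rfl
    · refine ⟨rfl, ?_⟩
      by_contra hc
      simp only [Set.mem_union, Set.mem_Ioo, not_or, not_and, not_lt] at hc
      have a1 := hc.1 h0
      have a2 : ζ ≤ 2 * Real.pi / 3 := by
        by_contra hh
        have := hc.2 (not_le.mp hh)
        linarith
      have b : 0 ≤ Real.sin (3 * ζ - Real.pi) :=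
        Real.sin_nonneg_of_nonneg_of_le_pi (by linarith) (by linarith)
      rw [Real.sin_sub_pi] at b
      simp only [pow_zero, one_mul] at e1
      nlinarith
    · exfalso
      simp only [pow_one] at e2
      nlinarith [mul_self_nonneg (Real.sin (2 * ζ))]
  · rintro ⟨rfl, h⟩
    have h3 : 0 < Real.sin (3 * ζ) ∧ Real.sin (2 * ζ) ≠ 0 := by
      rcases h with ⟨_, h⟩ | ⟨h, _⟩
      · exact ⟨Real.sin_pos_of_pos_of_lt_pi (by linarith) (by linarith),
          (Real.sin_pos_of_pos_of_lt_pi (by linarith) (by linarith)).ne'⟩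
      · have b : 0 < Real.sin (3 * ζ - 2 * Real.pi) :=
          Real.sin_pos_of_pos_of_lt_pi (by linarith) (by linarith)
        have c : 0 < Real.sin (2 * ζ - Real.pi) :=
          Real.sin_pos_of_pos_of_lt_pi (by linarith) (by linarith)
        rw [Real.sin_sub_two_pi] at b
        rw [Real.sin_sub_pi] at c
        exact ⟨b, by intro h; linarith⟩
    obtain ⟨h3, h2⟩ := h3
    intro k k1 k3
    have g1 := mul_pos hs h3
    have g2 := mul_self_pos.mpr h2
    interval_cases k
    · norm_num
      exact g1
    · norm_num
      exact h2
    · norm_num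
      nlinarith
end

section
/- Let ζ ∈ (0,π) and σ ∈ {0,1}. The Suzuki–Takahashi conditions for a 5-string, namely (−1)^σ · sin(kζ) · sin((5−k)ζ) > 0 for all k = 1, 2, 3, 4, hold if and only if either (σ = 0 and ζ ∈ (0, π/4) ∪ (π/2, 2π/3)) or (σ = 1 and ζ ∈ (π/3, π/2) ∪ (3π/4, π)). -/
open Real in
lemma st_neg1 {x : ℝ} (h : π < x) (h' : x < 2 * π) : sin x < 0 := by
  have := sin_pos_of_pos_of_lt_pi (x := x - π) (by linarith) (by linarith)
  rw [sin_sub_pi] at this; linarith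

open Real in
lemma st_nonpos1 {x : ℝ} (h : π ≤ x) (h' : x ≤ 2 * π) : sin x ≤ 0 := by
  have := sin_nonneg_of_nonneg_of_le_pi (x := x - π) (by linarith) (by linarith)
  rw [sin_sub_pi] at this; linarith

open Real in
lemma st_pos2 {x : ℝ} (h : 2 * π < x) (h' : x < 3 * π) : 0 < sin x := by
  have := sin_pos_of_pos_of_lt_pi (x := x - 2 * π) (by linarith) (by linarith)
  rwa [sin_sub_two_pi] at this

open Real in
lemma st_nonneg2 {x : ℝ} (h : 2 * π ≤ x) (h' : x ≤ 3 * π) : 0 ≤ sin x := by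
  have := sin_nonneg_of_nonneg_of_le_pi (x := x - 2 * π) (by linarith) (by linarith)
  rwa [sin_sub_two_pi] at this

open Real in
lemma st_neg3 {x : ℝ} (h : 3 * π < x) (h' : x < 4 * π) : sin x < 0 := by
  have := st_neg1 (x := x - 2 * π) (by linarith) (by linarith)
  rwa [sin_sub_two_pi] at this

open Real in
lemma st_red (ζ c : ℝ) : (∀ k : ℕ, 1 ≤ k → k ≤ 4 →
    0 < c * sin ((k : ℝ) * ζ) * sin ((5 - (k : ℝ)) * ζ)) ↔
    0 < c * (sin ζ * sin (4 * ζ)) ∧ 0 < c * (sin (2 * ζ) * sin (3 * ζ)) := by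
  constructor
  · intro h
    have h1 := h 1 (by norm_num) (by norm_num)
    have h2 := h 2 (by norm_num) (by norm_num)
    norm_num at h1 h2
    constructor <;> linarith
  · rintro ⟨h1, h2⟩ k hk hk'
    interval_cases k <;> norm_num <;> linarith


/-- Suzuki–Takahashi conditions for a 5-string: `(-1)^σ·sin(kζ)·sin((5-k)ζ) > 0`
for `k = 1,…,4` holds iff (`σ = 0` and `ζ ∈ (0, π/4) ∪ (π/2, 2π/3)`) or
(`σ = 1` and `ζ ∈ (π/3, π/2) ∪ (3π/4, π)`). -/
theorem suzuki_takahashi_five_string (ζ : ℝ) (hζ : ζ ∈ Set.Ioo 0 Real.pi)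
    (σ : ℕ) (hσ : σ = 0 ∨ σ = 1) :
    (∀ k : ℕ, 1 ≤ k → k ≤ 4 →
        0 < (-1 : ℝ) ^ σ * Real.sin ((k : ℝ) * ζ) * Real.sin ((5 - (k : ℝ)) * ζ)) ↔
      (σ = 0 ∧ ζ ∈ Set.Ioo 0 (Real.pi / 4) ∪ Set.Ioo (Real.pi / 2) (2 * Real.pi / 3)) ∨
        (σ = 1 ∧ ζ ∈ Set.Ioo (Real.pi / 3) (Real.pi / 2) ∪
          Set.Ioo (3 * Real.pi / 4) Real.pi) := by
  obtain ⟨h0, hpi⟩ := hζ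
  rw [st_red]
  have hs := Real.sin_pos_of_pos_of_lt_pi h0 hpi
  simp only [Set.mem_union, Set.mem_Ioo]
  rcases hσ with rfl | rfl
  · simp only [pow_zero, one_mul, true_and, zero_ne_one, false_and, or_false]
    constructor
    · rintro ⟨h1, h2⟩
      have hA := (mul_pos_iff_of_pos_left hs).1 h1
      by_cases c1 : ζ < Real.pi / 4
      · exact Or.inl ⟨h0, c1⟩
      by_cases c2 : ζ ≤ Real.pi / 2
      · have := st_nonpos1 (x := 4 * ζ) (by linarith) (by linarith)
        linarith
      by_cases c3 : ζ < 2 * Real.pi / 3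
      · exact Or.inr ⟨by linarith, c3⟩
      have hB := st_neg1 (x := 2 * ζ) (by linarith) (by linarith)
      have hC := st_nonneg2 (x := 3 * ζ) (by linarith) (by linarith)
      nlinarith
    · rintro (⟨_, h⟩ | ⟨h, h'⟩)
      · exact ⟨mul_pos hs (Real.sin_pos_of_pos_of_lt_pi (by linarith) (by linarith)),
          mul_pos (Real.sin_pos_of_pos_of_lt_pi (by linarith) (by linarith))
            (Real.sin_pos_of_pos_of_lt_pi (by linarith) (by linarith))⟩
      · exact ⟨mul_pos hs (st_pos2 (by linarith) (by linarith)),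
          mul_pos_of_neg_of_neg (st_neg1 (by linarith) (by linarith))
            (st_neg1 (by linarith) (by linarith))⟩
  · simp only [pow_one, neg_mul, one_mul, true_and, one_ne_zero, false_and, false_or, neg_pos]
    constructor
    · rintro ⟨h1, h2⟩
      by_cases c1 : ζ ≤ Real.pi / 3
      · have hB := Real.sin_nonneg_of_nonneg_of_le_pi (x := 2 * ζ) (by linarith) (by linarith)
        have hC := Real.sin_nonneg_of_nonneg_of_le_pi (x := 3 * ζ) (by linarith) (by linarith)
        nlinarith
      by_cases c2 : ζ < Real.pi / 2
      · exact Or.inl ⟨by linarith, c2⟩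
      by_cases c3 : ζ ≤ 3 * Real.pi / 4
      · have := st_nonneg2 (x := 4 * ζ) (by linarith) (by linarith)
        nlinarith
      exact Or.inr ⟨by linarith, hpi⟩
    · rintro (⟨h, h'⟩ | ⟨h, _⟩)
      · exact ⟨mul_neg_of_pos_of_neg hs (st_neg1 (by linarith) (by linarith)),
          mul_neg_of_pos_of_neg (Real.sin_pos_of_pos_of_lt_pi (by linarith) (by linarith))
            (st_neg1 (by linarith) (by linarith))⟩
      · exact ⟨mul_neg_of_pos_of_neg hs (st_neg3 (by linarith) (by linarith)),
          mul_neg_of_neg_of_pos (st_neg1 (by linarith) (by linarith))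
            (st_pos2 (by linarith) (by linarith))⟩
end

section
/- Let ζ ∈ (0,π) and σ ∈ {0,1}. The Suzuki–Takahashi conditions for a 6-string, namely (−1)^σ · sin(kζ) · sin((6−k)ζ) > 0 for all k = 1, …, 5, hold if and only if σ = 0 and ζ ∈ (0, π/5) ∪ (4π/5, π). In particular, they never hold with σ = 1. -/
theorem st_aux (x : ℝ) (h0 : 0 < x) (h1 : x < Real.pi / 5) (k : ℕ) (hk : 1 ≤ k) (hk5 : k ≤ 5) :
    0 < Real.sin ((k : ℝ) * x) := by
  have h1k : (1 : ℝ) ≤ k := by exact_mod_cast hk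
  have h5k : (k : ℝ) ≤ 5 := by exact_mod_cast hk5
  apply Real.sin_pos_of_pos_of_lt_pi
  · positivity
  · nlinarith

theorem st_aux2 (x : ℝ) (h0 : 0 < x) (h1 : x < Real.pi / 5) (k : ℕ) (hk : 1 ≤ k) (hk5 : k ≤ 5) :
    0 < Real.sin ((k : ℝ) * x) * Real.sin ((6 - (k : ℝ)) * x) := by
  have h := st_aux x h0 h1 (6 - k) (by omega) (by omega)
  rw [Nat.cast_sub (by omega)] at h
  exact mul_pos (st_aux x h0 h1 k hk hk5) (by exact_mod_cast h)

/-- Suzuki–Takahashi conditions for a 6-string: `(-1)^σ·sin(kζ)·sin((6-k)ζ) > 0`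
for `k = 1,…,5` holds iff `σ = 0` and `ζ ∈ (0, π/5) ∪ (4π/5, π)`. -/
theorem suzuki_takahashi_six_string (ζ : ℝ) (hζ : ζ ∈ Set.Ioo 0 Real.pi)
    (σ : ℕ) (hσ : σ = 0 ∨ σ = 1) :
    (∀ k : ℕ, 1 ≤ k → k ≤ 5 →
        0 < (-1 : ℝ) ^ σ * Real.sin ((k : ℝ) * ζ) * Real.sin ((6 - (k : ℝ)) * ζ)) ↔
      σ = 0 ∧ ζ ∈ Set.Ioo 0 (Real.pi / 5) ∪ Set.Ioo (4 * Real.pi / 5) Real.pi := by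
  obtain ⟨h0, hpi⟩ := hζ
  constructor
  · intro h
    rcases hσ with rfl | rfl
    · refine ⟨rfl, ?_⟩
      have ha := h 1 (by norm_num) (by norm_num)
      have hb := h 2 (by norm_num) (by norm_num)
      have hs := Real.sin_pos_of_pos_of_lt_pi h0 hpi
      norm_num at ha hb
      have h5 : 0 < Real.sin (5 * ζ) := (mul_pos_iff_of_pos_left hs).1 ha
      have hc : 0 < Real.cos (2 * ζ) := by
        rw [show 4 * ζ = 2 * (2 * ζ) by ring, Real.sin_two_mul (2 * ζ)] at hb
        by_contra hn
        nlinarith [mul_nonneg (sq_nonneg (Real.sin (2 * ζ))) (sub_nonneg.2 (not_lt.1 hn))]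
      by_contra hn
      simp only [Set.mem_union, Set.mem_Ioo, not_or, not_and, not_lt] at hn
      have hl := hn.1 h0
      have hu : ζ ≤ 4 * Real.pi / 5 := by
        by_contra hx
        exact absurd (hn.2 (not_le.1 hx)) (not_le.2 hpi)
      rcases le_total ζ (2 * Real.pi / 5) with h2 | h2
      · have := Real.sin_nonneg_of_nonneg_of_le_pi (x := 5 * ζ - Real.pi) (by linarith) (by linarith)
        rw [Real.sin_sub_pi] at this
        linarith
      rcases le_total ζ (3 * Real.pi / 5) with h3 | h3
      · have := Real.cos_nonpos_of_pi_div_two_le_of_le (x := 2 * ζ) (by linarith) (by linarith)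
        linarith
      · have := Real.sin_nonneg_of_nonneg_of_le_pi (x := 5 * ζ - 2 * Real.pi - Real.pi)
          (by linarith) (by linarith)
        rw [Real.sin_sub_pi, Real.sin_sub_two_pi] at this
        linarith
    · have hc := h 3 (by norm_num) (by norm_num)
      norm_num at hc
      nlinarith [mul_self_nonneg (Real.sin (3 * ζ))]
  · rintro ⟨rfl, hz⟩ k hk hk5
    rw [pow_zero, one_mul]
    rcases hz with hz | hz
    · exact st_aux2 ζ hz.1 hz.2 k hk hk5
    · have h := st_aux2 (Real.pi - ζ) (by linarith) (by linarith [hz.1]) k hk hk5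
      have e : ∀ a b : ℝ, Real.sin a * Real.sin b = (Real.cos (a - b) - Real.cos (a + b)) / 2 := by
        intro a b
        rw [Real.cos_sub, Real.cos_add]; ring
      rw [e] at h ⊢
      have e1 : Real.cos ((k : ℝ) * (Real.pi - ζ) - (6 - (k : ℝ)) * (Real.pi - ζ))
          = Real.cos ((k : ℝ) * ζ - (6 - (k : ℝ)) * ζ) := by
        rw [← Real.cos_neg, ← Real.cos_add_int_mul_two_pi _ ((k : ℤ) - 3)]
        congr 1; push_cast; ring
      have e2 : Real.cos ((k : ℝ) * (Real.pi - ζ) + (6 - (k : ℝ)) * (Real.pi - ζ))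
          = Real.cos ((k : ℝ) * ζ + (6 - (k : ℝ)) * ζ) := by
        rw [← Real.cos_neg, ← Real.cos_add_int_mul_two_pi _ 3]
        congr 1; push_cast; ring
      rwa [e1, e2] at h
end

section
/- Let ζ ∈ (0,π) and σ ∈ {0,1}. The Suzuki–Takahashi conditions for an 8-string, namely (−1)^σ · sin(kζ) · sin((8−k)ζ) > 0 for all k = 1, …, 7, hold if and only if σ = 0 and ζ ∈ (0, π/7) ∪ (π/3, 2π/5) ∪ (3π/5, 2π/3) ∪ (6π/7, π). In particular, they never hold with σ = 1. -/
theorem st_pos (m : ℤ) (x : ℝ) (h1 : 2 * m * Real.pi < x) (h2 : x < (2 * m + 1) * Real.pi) :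
    0 < Real.sin x := by
  rw [← Real.sin_sub_int_mul_two_pi x m]
  apply Real.sin_pos_of_pos_of_lt_pi <;> linarith

theorem st_neg (m : ℤ) (x : ℝ) (h1 : (2 * m - 1) * Real.pi < x) (h2 : x < 2 * m * Real.pi) :
    Real.sin x < 0 := by
  rw [← Real.sin_sub_int_mul_two_pi x m]
  apply Real.sin_neg_of_neg_of_neg_pi_lt <;> linarith

theorem st_nonneg (m : ℤ) (x : ℝ) (h1 : 2 * m * Real.pi ≤ x) (h2 : x ≤ (2 * m + 1) * Real.pi) :
    0 ≤ Real.sin x := by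
  rw [← Real.sin_sub_int_mul_two_pi x m]
  apply Real.sin_nonneg_of_nonneg_of_le_pi <;> linarith

theorem st_nonpos (m : ℤ) (x : ℝ) (h1 : (2 * m - 1) * Real.pi ≤ x) (h2 : x ≤ 2 * m * Real.pi) :
    Real.sin x ≤ 0 := by
  rw [← Real.sin_sub_int_mul_two_pi x m]
  apply Real.sin_nonpos_of_nonpos_of_neg_pi_le <;> linarith

/-- Suzuki–Takahashi conditions for an 8-string: `(-1)^σ·sin(kζ)·sin((8-k)ζ) > 0`
for `k = 1,…,7` holds iff `σ = 0` and
`ζ ∈ (0, π/7) ∪ (π/3, 2π/5) ∪ (3π/5, 2π/3) ∪ (6π/7, π)`. -/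
theorem suzuki_takahashi_eight_string (ζ : ℝ) (hζ : ζ ∈ Set.Ioo 0 Real.pi)
    (σ : ℕ) (hσ : σ = 0 ∨ σ = 1) :
    (∀ k : ℕ, 1 ≤ k → k ≤ 7 →
        0 < (-1 : ℝ) ^ σ * Real.sin ((k : ℝ) * ζ) * Real.sin ((8 - (k : ℝ)) * ζ)) ↔
      σ = 0 ∧ ζ ∈ Set.Ioo 0 (Real.pi / 7) ∪ Set.Ioo (Real.pi / 3) (2 * Real.pi / 5) ∪
        Set.Ioo (3 * Real.pi / 5) (2 * Real.pi / 3) ∪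
        Set.Ioo (6 * Real.pi / 7) Real.pi := by
  obtain ⟨h0, hp⟩ := hζ
  have hpi := Real.pi_pos
  constructor
  · intro h
    have h4 := h 4 (by norm_num) (by norm_num)
    have h1 := h 1 (by norm_num) (by norm_num)
    have h3 := h 3 (by norm_num) (by norm_num)
    rcases hσ with rfl | rfl
    · refine ⟨rfl, ?_⟩
      norm_num at h1 h3
      have hs := Real.sin_pos_of_pos_of_lt_pi h0 hp
      have h7 : 0 < Real.sin (7 * ζ) := (mul_pos_iff_of_pos_left hs).1 h1
      simp only [Set.mem_union, Set.mem_Ioo]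
      by_contra hc
      simp only [not_or, not_and, not_lt] at hc
      obtain ⟨⟨⟨c1, c2⟩, c3⟩, c4⟩ := hc
      have d0 : 1 * Real.pi / 7 ≤ ζ := by
        by_contra hd
        push Not at hd
        linarith [c1 (by linarith)]
      have d1 : 2 * Real.pi / 7 < ζ := by
        by_contra hd
        push Not at hd
        exact absurd (st_nonpos 1 (7 * ζ) (by push_cast; linarith) (by push_cast; linarith)) (not_le.2 h7)
      have d2 : 1 * Real.pi / 3 < ζ := by
        by_contra hd
        push Not at hd
        exact absurd (mul_nonpos_of_nonneg_of_nonpos (st_nonneg 0 (3 * ζ) (by push_cast; linarith) (by push_cast; linarith)) (st_nonpos 1 (5 * ζ) (by push_cast; linarith) (by push_cast; linarith))) (not_le.2 h3)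
      have d3 : 2 * Real.pi / 5 ≤ ζ := by
        by_contra hd
        push Not at hd
        linarith [c2 (by linarith)]
      have d4 : 3 * Real.pi / 7 < ζ := by
        by_contra hd
        push Not at hd
        exact absurd (mul_nonpos_of_nonpos_of_nonneg (st_nonpos 1 (3 * ζ) (by push_cast; linarith) (by push_cast; linarith)) (st_nonneg 1 (5 * ζ) (by push_cast; linarith) (by push_cast; linarith))) (not_le.2 h3)
      have d5 : 4 * Real.pi / 7 < ζ := by
        by_contra hd
        push Not at hd
        exact absurd (st_nonpos 2 (7 * ζ) (by push_cast; linarith) (by push_cast; linarith)) (not_le.2 h7)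
      have d6 : 3 * Real.pi / 5 < ζ := by
        by_contra hd
        push Not at hd
        exact absurd (mul_nonpos_of_nonpos_of_nonneg (st_nonpos 1 (3 * ζ) (by push_cast; linarith) (by push_cast; linarith)) (st_nonneg 1 (5 * ζ) (by push_cast; linarith) (by push_cast; linarith))) (not_le.2 h3)
      have d7 : 2 * Real.pi / 3 ≤ ζ := by
        by_contra hd
        push Not at hd
        linarith [c3 (by linarith)]
      have d8 : 5 * Real.pi / 7 < ζ := by
        by_contra hd
        push Not at hd
        exact absurd (mul_nonpos_of_nonneg_of_nonpos (st_nonneg 1 (3 * ζ) (by push_cast; linarith) (by push_cast; linarith)) (st_nonpos 2 (5 * ζ) (by push_cast; linarith) (by push_cast; linarith))) (not_le.2 h3)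
      have d9 : 6 * Real.pi / 7 < ζ := by
        by_contra hd
        push Not at hd
        exact absurd (st_nonpos 3 (7 * ζ) (by push_cast; linarith) (by push_cast; linarith)) (not_le.2 h7)
      linarith [c4 (by linarith)]
    · norm_num at h4
      nlinarith [mul_self_nonneg (Real.sin (4 * ζ))]
  · rintro ⟨rfl, h⟩
    have key : 0 < Real.sin (1 * ζ) * Real.sin (7 * ζ) ∧ 0 < Real.sin (2 * ζ) * Real.sin (6 * ζ) ∧
        0 < Real.sin (3 * ζ) * Real.sin (5 * ζ) ∧ 0 < Real.sin (4 * ζ) * Real.sin (4 * ζ) := by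
      simp only [Set.mem_union, Set.mem_Ioo] at h
      rcases h with ((⟨a, b⟩ | ⟨a, b⟩) | ⟨a, b⟩) | ⟨a, b⟩
      · exact ⟨mul_pos (st_pos 0 (1 * ζ) (by push_cast; linarith) (by push_cast; linarith))
            (st_pos 0 (7 * ζ) (by push_cast; linarith) (by push_cast; linarith)),
          mul_pos (st_pos 0 (2 * ζ) (by push_cast; linarith) (by push_cast; linarith))
            (st_pos 0 (6 * ζ) (by push_cast; linarith) (by push_cast; linarith)),
          mul_pos (st_pos 0 (3 * ζ) (by push_cast; linarith) (by push_cast; linarith))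
            (st_pos 0 (5 * ζ) (by push_cast; linarith) (by push_cast; linarith)),
          mul_pos (st_pos 0 (4 * ζ) (by push_cast; linarith) (by push_cast; linarith))
            (st_pos 0 (4 * ζ) (by push_cast; linarith) (by push_cast; linarith))⟩
      · exact ⟨mul_pos (st_pos 0 (1 * ζ) (by push_cast; linarith) (by push_cast; linarith))
            (st_pos 1 (7 * ζ) (by push_cast; linarith) (by push_cast; linarith)),
          mul_pos (st_pos 0 (2 * ζ) (by push_cast; linarith) (by push_cast; linarith))
            (st_pos 1 (6 * ζ) (by push_cast; linarith) (by push_cast; linarith)),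
          mul_pos_of_neg_of_neg (st_neg 1 (3 * ζ) (by push_cast; linarith) (by push_cast; linarith))
            (st_neg 1 (5 * ζ) (by push_cast; linarith) (by push_cast; linarith)),
          mul_pos_of_neg_of_neg (st_neg 1 (4 * ζ) (by push_cast; linarith) (by push_cast; linarith))
            (st_neg 1 (4 * ζ) (by push_cast; linarith) (by push_cast; linarith))⟩
      · exact ⟨mul_pos (st_pos 0 (1 * ζ) (by push_cast; linarith) (by push_cast; linarith))
            (st_pos 2 (7 * ζ) (by push_cast; linarith) (by push_cast; linarith)),
          mul_pos_of_neg_of_neg (st_neg 1 (2 * ζ) (by push_cast; linarith) (by push_cast; linarith))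
            (st_neg 2 (6 * ζ) (by push_cast; linarith) (by push_cast; linarith)),
          mul_pos_of_neg_of_neg (st_neg 1 (3 * ζ) (by push_cast; linarith) (by push_cast; linarith))
            (st_neg 2 (5 * ζ) (by push_cast; linarith) (by push_cast; linarith)),
          mul_pos (st_pos 1 (4 * ζ) (by push_cast; linarith) (by push_cast; linarith))
            (st_pos 1 (4 * ζ) (by push_cast; linarith) (by push_cast; linarith))⟩
      · exact ⟨mul_pos (st_pos 0 (1 * ζ) (by push_cast; linarith) (by push_cast; linarith))
            (st_pos 3 (7 * ζ) (by push_cast; linarith) (by push_cast; linarith)),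
          mul_pos_of_neg_of_neg (st_neg 1 (2 * ζ) (by push_cast; linarith) (by push_cast; linarith))
            (st_neg 3 (6 * ζ) (by push_cast; linarith) (by push_cast; linarith)),
          mul_pos (st_pos 1 (3 * ζ) (by push_cast; linarith) (by push_cast; linarith))
            (st_pos 2 (5 * ζ) (by push_cast; linarith) (by push_cast; linarith)),
          mul_pos_of_neg_of_neg (st_neg 2 (4 * ζ) (by push_cast; linarith) (by push_cast; linarith))
            (st_neg 2 (4 * ζ) (by push_cast; linarith) (by push_cast; linarith))⟩
    obtain ⟨k1, k2, k3, k4⟩ := key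
    intro k hk1 hk7
    interval_cases k <;> norm_num at k1 k2 k3 k4 ⊢ <;> first | assumption | (rw [mul_comm]; assumption)
end

section
/- Let n_p and n_h be natural numbers and let (δ_m)_{m≥1} be a sequence of positive reals with δ_m → 0 and m·δ_m → +∞ as m → ∞. Then lim_{m→∞} (2 m δ_m)^{2 n_p n_h} · ∫_{(0,∞)^{n_p}} ∫_{(0,∞)^{n_h}} (∏_{a=1}^{n_p} e^{−k_a}) (∏_{b=1}^{n_h} e^{−t_b}) · (∏_{1≤a<a'≤n_p} (k_a − k_{a'})²) · (∏_{1≤b<b'≤n_h} (t_b − t_{b'})²) · ∏_{a=1}^{n_p} ∏_{b=1}^{n_h} (2 m δ_m + k_a + t_b)^{−2} dk dt = (∏_{j=1}^{n_p} j!·(j−1)!) · (∏_{j=1}^{n_h} j!·(j−1)!). -/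
open MeasureTheory

noncomputable def feG (n : ℕ) (x : Fin n → ℝ) : ℝ :=
  (∏ a, Real.exp (-x a)) * ∏ p ∈ Finset.univ.filter (fun p : Fin n × Fin n => p.1 < p.2),
    (x p.1 - x p.2) ^ 2

lemma fe_vand (n : ℕ) (x : Fin n → ℝ) :
    ∏ p ∈ Finset.univ.filter (fun p : Fin n × Fin n => p.1 < p.2), (x p.1 - x p.2) ^ 2
      = (Matrix.vandermonde x).det ^ 2 := by
  rw [Matrix.det_vandermonde, ← Finset.prod_pow]
  simp_rw [← Finset.prod_pow]
  rw [Finset.prod_filter, Fintype.prod_prod_type]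
  refine Finset.prod_congr rfl fun i _ => ?_
  rw [← Finset.prod_filter]
  refine Finset.prod_congr ?_ fun j _ => by ring
  ext j; simp

lemma fe_expand (n : ℕ) (x : Fin n → ℝ) :
    feG n x = ∑ σ : Equiv.Perm (Fin n), ∑ τ : Equiv.Perm (Fin n),
      ((Equiv.Perm.sign σ : ℤ) : ℝ) * ((Equiv.Perm.sign τ : ℤ) : ℝ) *
        ∏ a, (Real.exp (-x a) * x a ^ ((σ a : ℕ) + (τ a : ℕ))) := by
  unfold feG
  rw [fe_vand, sq, ← Matrix.det_transpose, Matrix.det_apply', Finset.sum_mul_sum, Finset.mul_sum]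
  refine Finset.sum_congr rfl fun σ _ => ?_
  rw [Finset.mul_sum]
  refine Finset.sum_congr rfl fun τ _ => ?_
  simp only [Matrix.transpose_apply, Matrix.vandermonde_apply, pow_add, Finset.prod_mul_distrib]
  ring

lemma fe_int1 (k : ℕ) :
    IntegrableOn (fun x : ℝ => Real.exp (-x) * x ^ k) (Set.Ioi 0) ∧
    ∫ x in Set.Ioi (0:ℝ), Real.exp (-x) * x ^ k = k.factorial := by
  have h := Real.GammaIntegral_convergent (s := (k:ℝ) + 1) (by positivity)
  have h2 := Real.Gamma_eq_integral (s := (k:ℝ) + 1) (by positivity)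
  simp only [add_sub_cancel_right, Real.rpow_natCast] at h h2
  exact ⟨h, by rw [← h2, Real.Gamma_nat_eq_factorial]⟩

def feA (n : ℕ) : Matrix (Fin n) (Fin n) ℝ := fun i j => (((i : ℕ) + (j : ℕ)).factorial : ℝ)

lemma fe_detA (n : ℕ) : (feA n).det = (∏ i : Fin n, ((i : ℕ).factorial : ℝ)) ^ 2 := by
  let L : Matrix (Fin n) (Fin n) ℝ := Matrix.of fun i j => ((i : ℕ).choose (j : ℕ) : ℝ)
  let D : Matrix (Fin n) (Fin n) ℝ := Matrix.diagonal fun i => ((i : ℕ).factorial : ℝ)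
  have hL : L.det = 1 := by
    rw [Matrix.det_of_isLowerTriangular]
    · simp [L]
    · intro i j hij
      have : (i : ℕ) < j := by simpa using hij
      simp [L, Nat.choose_eq_zero_of_lt this]
  have hA : feA n = D * (L * L.transpose) * D := by
    ext i j
    rw [Matrix.mul_diagonal, Matrix.diagonal_mul, Matrix.mul_apply]
    simp only [L, Matrix.transpose_apply, Matrix.of_apply, feA]
    have h : ((i : ℕ) + j).choose i = ∑ k : Fin n, (i : ℕ).choose k * (j : ℕ).choose k := by
      rw [Nat.add_choose_eq, Finset.Nat.sum_antidiagonal_eq_sum_range_succ_mk,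
        Fin.sum_univ_eq_sum_range (fun k => (i : ℕ).choose k * (j : ℕ).choose k) n,
        ← Finset.sum_range_reflect]
      have : Finset.range ((i:ℕ) + 1) ⊆ Finset.range n := by
        intro k; simp; omega
      rw [← Finset.sum_subset this]
      · refine Finset.sum_congr rfl fun k hk => ?_
        have : k ≤ (i:ℕ) := by simp at hk; omega
        have e : (i:ℕ) + 1 - 1 - k = i - k := by omega
        have e2 : (i:ℕ) - (i - k) = k := by omega
        simp only [e, e2, Nat.choose_symm this]
      · intro k _ hk
        have : (i:ℕ) < k := by simp at hk; omega
        simp [Nat.choose_eq_zero_of_lt this]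
    have h3 := Nat.add_choose_mul_factorial_mul_factorial (i:ℕ) (j:ℕ)
    rw [← h3, Nat.choose_symm_add.symm, h]
    push_cast
    ring
  rw [hA, Matrix.det_mul, Matrix.det_mul, Matrix.det_mul, Matrix.det_transpose, hL,
    Matrix.det_diagonal]
  ring

lemma fe_const (n : ℕ) : (n.factorial : ℝ) * (∏ i : Fin n, ((i : ℕ).factorial : ℝ)) ^ 2
    = ∏ j ∈ Finset.Icc 1 n, ((Nat.factorial j : ℝ) * (Nat.factorial (j - 1) : ℝ)) := by
  induction n with
  | zero => simp
  | succ n ih =>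
    rw [Finset.prod_Icc_succ_top (by omega), ← ih, Fin.prod_univ_castSucc, Nat.factorial_succ]
    simp
    ring

lemma fe_main (n : ℕ) :
    IntegrableOn (feG n) (Set.univ.pi fun _ => Set.Ioi 0) ∧
    ∫ x in (Set.univ.pi fun _ => Set.Ioi 0), feG n x
      = ∏ j ∈ Finset.Icc 1 n, ((Nat.factorial j : ℝ) * (Nat.factorial (j - 1) : ℝ)) := by
  have hI : ∀ σ τ : Equiv.Perm (Fin n), Integrable (fun x : Fin n → ℝ =>
      ((Equiv.Perm.sign σ : ℤ) : ℝ) * ((Equiv.Perm.sign τ : ℤ) : ℝ) *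
        ∏ a, (Real.exp (-x a) * x a ^ ((σ a : ℕ) + (τ a : ℕ))))
        (Measure.pi fun _ : Fin n => (volume : Measure ℝ).restrict (Set.Ioi 0)) := by
    intro σ τ
    refine Integrable.const_mul ?_ _
    exact Integrable.fintype_prod (f := fun a y => Real.exp (-y) * y ^ ((σ a : ℕ) + (τ a : ℕ)))
      fun a => (fe_int1 _).1
  have hG : feG n = fun x => _ := funext (fe_expand n)
  unfold IntegrableOn
  rw [volume_pi, Measure.restrict_pi_pi, hG]
  refine ⟨integrable_finsetSum _ fun σ _ => integrable_finsetSum _ fun τ _ => hI σ τ, ?_⟩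
  rw [integral_finsetSum _ fun σ _ => integrable_finsetSum _ fun τ _ => hI σ τ]
  have : ∀ σ : Equiv.Perm (Fin n), ∫ x, ∑ τ : Equiv.Perm (Fin n),
      ((Equiv.Perm.sign σ : ℤ) : ℝ) * ((Equiv.Perm.sign τ : ℤ) : ℝ) *
        ∏ a, (Real.exp (-x a) * x a ^ ((σ a : ℕ) + (τ a : ℕ)))
        ∂(Measure.pi fun _ : Fin n => (volume : Measure ℝ).restrict (Set.Ioi 0))
        = (feA n).det := by
    intro σ
    rw [integral_finsetSum _ fun τ _ => hI σ τ]
    have h1 : ∀ τ : Equiv.Perm (Fin n), ∫ x, 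
      ((Equiv.Perm.sign σ : ℤ) : ℝ) * ((Equiv.Perm.sign τ : ℤ) : ℝ) *
        ∏ a, (Real.exp (-x a) * x a ^ ((σ a : ℕ) + (τ a : ℕ)))
        ∂(Measure.pi fun _ : Fin n => (volume : Measure ℝ).restrict (Set.Ioi 0))
        = ((Equiv.Perm.sign σ : ℤ) : ℝ) * (((Equiv.Perm.sign τ : ℤ) : ℝ) *
          ∏ a, ((feA n).submatrix σ id).transpose (τ a) a) := by
      intro τ
      rw [integral_const_mul, integral_fintype_prod_eq_prod
        (f := fun a y => Real.exp (-y) * y ^ ((σ a : ℕ) + (τ a : ℕ))), mul_assoc]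
      simp only [(fe_int1 _).2]
      rfl
    simp_rw [h1]
    rw [← Finset.mul_sum, ← Matrix.det_apply', Matrix.det_transpose, Matrix.det_permute, ← mul_assoc]
    have : ((Equiv.Perm.sign σ : ℤ) : ℝ) * ((Equiv.Perm.sign σ : ℤ) : ℝ) = 1 := by
      exact_mod_cast Int.units_coe_mul_self (Equiv.Perm.sign σ)
    rw [this, one_mul]
  simp_rw [this]
  rw [Finset.sum_const, Finset.card_univ, Fintype.card_perm, Fintype.card_fin, nsmul_eq_mul,
    fe_detA, fe_const]

lemma fe_lim (c : ℕ → ℝ) (hc : Filter.Tendsto c Filter.atTop Filter.atTop) (s : ℝ) :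
    Filter.Tendsto (fun m => (c m / (c m + s)) ^ 2) Filter.atTop (nhds 1) := by
  have h : Filter.Tendsto (fun m => (1 - s / (c m + s)) ^ 2) Filter.atTop (nhds 1) := by
    have h1 : Filter.Tendsto (fun m => s / (c m + s)) Filter.atTop (nhds 0) :=
      Filter.Tendsto.const_div_atTop (Filter.tendsto_atTop_add_const_right _ _ hc) s
    simpa using (h1.const_sub 1).pow 2
  refine h.congr' ?_
  filter_upwards [hc.eventually_gt_atTop (-s)] with m hm
  have : c m + s ≠ 0 := by linarith
  congr 1
  field_simp
  ring



/-- Large-`m` limit of the model integral describing particle and hole rapidities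
collapsing onto an endpoint of the Fermi zone: with `δ_m → 0` and `m·δ_m → ∞`,
`(2mδ_m)^{2 n_p n_h} · ∬ ∏ e^{-k_a} e^{-t_b} ∏(k_a-k_{a'})² ∏(t_b-t_{b'})²
  ∏(2mδ_m+k_a+t_b)^{-2} → (∏_{j=1}^{n_p} j!(j-1)!)·(∏_{j=1}^{n_h} j!(j-1)!)`. -/
theorem fermi_edge_model_integral_limit (np nh : ℕ) (δ : ℕ → ℝ)
    (hδpos : ∀ m : ℕ, 1 ≤ m → 0 < δ m)
    (hδ0 : Filter.Tendsto δ Filter.atTop (nhds 0))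
    (hmδ : Filter.Tendsto (fun m : ℕ => (m : ℝ) * δ m) Filter.atTop Filter.atTop) :
    Filter.Tendsto
      (fun m : ℕ =>
        (2 * (m : ℝ) * δ m) ^ (2 * np * nh) *
          ∫ z in {z : (Fin np → ℝ) × (Fin nh → ℝ) |
              (∀ a, 0 < z.1 a) ∧ ∀ b, 0 < z.2 b},
            (∏ a, Real.exp (-z.1 a)) * (∏ b, Real.exp (-z.2 b)) *
              (∏ p ∈ Finset.univ.filter (fun p : Fin np × Fin np => p.1 < p.2),
                (z.1 p.1 - z.1 p.2) ^ 2) *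
              (∏ p ∈ Finset.univ.filter (fun p : Fin nh × Fin nh => p.1 < p.2),
                (z.2 p.1 - z.2 p.2) ^ 2) *
              ∏ a, ∏ b, ((2 * (m : ℝ) * δ m + z.1 a + z.2 b) ^ 2)⁻¹)
      Filter.atTop
      (nhds
        ((∏ j ∈ Finset.Icc 1 np, ((Nat.factorial j : ℝ) * (Nat.factorial (j - 1) : ℝ))) *
          ∏ j ∈ Finset.Icc 1 nh, ((Nat.factorial j : ℝ) * (Nat.factorial (j - 1) : ℝ)))) := by
  set c : ℕ → ℝ := fun m => 2 * (m : ℝ) * δ m with hcdef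
  have hc : Filter.Tendsto c Filter.atTop Filter.atTop := by
    have := hmδ.const_mul_atTop (show (0:ℝ) < 2 by norm_num)
    simpa only [hcdef, mul_assoc] using this
  have hset : {z : (Fin np → ℝ) × (Fin nh → ℝ) | (∀ a, 0 < z.1 a) ∧ ∀ b, 0 < z.2 b}
      = (Set.univ.pi fun _ => Set.Ioi 0) ×ˢ (Set.univ.pi fun _ => Set.Ioi 0) := by
    ext z; simp [Set.mem_pi]
  obtain ⟨hi1, he1⟩ := fe_main np
  obtain ⟨hi2, he2⟩ := fe_main nh
  have hmeas : MeasurableSet ((Set.univ.pi fun _ : Fin np => Set.Ioi (0:ℝ)) ×ˢ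
      (Set.univ.pi fun _ : Fin nh => Set.Ioi (0:ℝ))) :=
    (MeasurableSet.univ_pi fun _ => measurableSet_Ioi).prod
      (MeasurableSet.univ_pi fun _ => measurableSet_Ioi)
  rw [hset, ← he1, ← he2, ← setIntegral_prod_mul, ← Measure.volume_eq_prod]
  simp_rw [← integral_const_mul]
  have hbi : IntegrableOn (fun z : (Fin np → ℝ) × (Fin nh → ℝ) => feG np z.1 * feG nh z.2)
      ((Set.univ.pi fun _ : Fin np => Set.Ioi (0:ℝ)) ×ˢ
      (Set.univ.pi fun _ : Fin nh => Set.Ioi (0:ℝ))) := by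
    have := Integrable.mul_prod hi1 hi2
    rwa [Measure.prod_restrict] at this
  have key : ∀ (m : ℕ) (z : (Fin np → ℝ) × (Fin nh → ℝ)), 
      (2 * (m : ℝ) * δ m) ^ (2 * np * nh) * ((∏ a, Real.exp (-z.1 a)) * (∏ b, Real.exp (-z.2 b)) *
              (∏ p ∈ Finset.univ.filter (fun p : Fin np × Fin np => p.1 < p.2),
                (z.1 p.1 - z.1 p.2) ^ 2) *
              (∏ p ∈ Finset.univ.filter (fun p : Fin nh × Fin nh => p.1 < p.2),
                (z.2 p.1 - z.2 p.2) ^ 2) *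
              ∏ a, ∏ b, ((2 * (m : ℝ) * δ m + z.1 a + z.2 b) ^ 2)⁻¹)
      = feG np z.1 * feG nh z.2 * ∏ a, ∏ b, (c m / (c m + (z.1 a + z.2 b))) ^ 2 := by
    intro m z
    have : ∏ a, ∏ b, (c m / (c m + (z.1 a + z.2 b))) ^ 2
        = (c m) ^ (2 * np * nh) * ∏ a, ∏ b, ((c m + z.1 a + z.2 b) ^ 2)⁻¹ := by
      have h1 : ∀ a b, (c m / (c m + (z.1 a + z.2 b))) ^ 2
          = c m ^ 2 * ((c m + z.1 a + z.2 b) ^ 2)⁻¹ := by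
        intro a b
        rw [div_pow, div_eq_mul_inv, add_assoc]
      simp_rw [h1, Finset.prod_mul_distrib, Finset.prod_const, Finset.card_univ, Fintype.card_fin,
        ← pow_mul]
      congr 2
      ring
    rw [this]
    simp only [feG, hcdef]
    ring
  simp_rw [key]
  refine tendsto_integral_filter_of_dominated_convergence
    (fun z => ‖feG np z.1 * feG nh z.2‖) ?_ ?_ hbi.norm ?_
  · refine Filter.Eventually.of_forall fun m => ?_
    refine hbi.aestronglyMeasurable.mul ?_
    exact Measurable.aestronglyMeasurable (by fun_prop)
  · filter_upwards [hc.eventually_gt_atTop 0] with m hm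
    refine (ae_restrict_iff' hmeas).2 (Filter.Eventually.of_forall fun z hz => ?_)
    simp only [Set.mem_prod, Set.mem_pi, Set.mem_univ, Set.mem_Ioi, true_implies] at hz
    rw [norm_mul]
    refine mul_le_of_le_one_right (norm_nonneg _) ?_
    rw [Real.norm_of_nonneg (Finset.prod_nonneg fun a _ => Finset.prod_nonneg fun b _ => sq_nonneg _)]
    refine Finset.prod_le_one (fun a _ => Finset.prod_nonneg fun b _ => sq_nonneg _) fun a _ => ?_
    refine Finset.prod_le_one (fun b _ => sq_nonneg _) fun b _ => ?_
    have h1 := hz.1 a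
    have h2 := hz.2 b
    refine pow_le_one₀ (by positivity) ?_
    rw [div_le_one (by positivity)]
    linarith
  · refine Filter.Eventually.of_forall fun z => ?_
    have h := tendsto_finsetProd Finset.univ fun (a : Fin np) _ =>
      tendsto_finsetProd Finset.univ fun (b : Fin nh) _ => fe_lim c hc (z.1 a + z.2 b)
    simpa using h.const_mul (feG np z.1 * feG nh z.2)
end

section
/- Let ζ ∈ (0,π) with sin(2ζ) ≠ 0, set ζ_p = min(ζ, π−ζ) and s₂ = sgn(sin 2ζ), and define Φ(x) = sinh(x)/sinh(x − iζ). Then for every τ ∈ {−1, +1}, every sign σ ∈ {−1, +1}, and every ν ∈ ℂ for which none of the hyperbolic sines appearing in a denominator below vanishes, one has: iτ · ( sinh²(−σ i τ ζ_p) / sinh(−2 σ i τ ζ_p) ) · Φ(ν)·Φ(−ν) · Φ(ν + σ i τ ζ_p)·Φ(−ν − σ i τ ζ_p) = σ · s₂ · (sin²(ζ)/sin(2ζ)) · sinh(ν)·sinh(ν + σ i s₂ τ ζ) / ( sinh(ν − σ i s₂ τ ζ) · sinh(ν + 2 σ i s₂ τ ζ) ). -/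
theorem rw_aux (ζ : ℝ) (hs2 : Real.sin (2 * ζ) ≠ 0) (e σ τ : ℂ) (he : e = 1 ∨ e = -1)
    (hτ : τ = 1 ∨ τ = -1) (hσ : σ = 1 ∨ σ = -1) (ν a b : ℂ)
    (hb : b = σ * Complex.I * e * τ * (ζ : ℂ))
    (hab : ∀ x, Complex.sinh (x + a) = e * Complex.sinh (x + b))
    (hd1 : Complex.sinh (ν - Complex.I * (ζ : ℂ)) ≠ 0)
    (hd2 : Complex.sinh (-ν - Complex.I * (ζ : ℂ)) ≠ 0)
    (hd3 : Complex.sinh (ν + a - Complex.I * (ζ : ℂ)) ≠ 0)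
    (hd4 : Complex.sinh (-ν - a - Complex.I * (ζ : ℂ)) ≠ 0) :
    Complex.I * τ * (Complex.sinh (-a) ^ 2 / Complex.sinh (-(2 * a))) *
        (Complex.sinh ν / Complex.sinh (ν - Complex.I * (ζ : ℂ)) *
          (Complex.sinh (-ν) / Complex.sinh (-ν - Complex.I * (ζ : ℂ)))) *
        (Complex.sinh (ν + a) / Complex.sinh (ν + a - Complex.I * (ζ : ℂ)) *
          (Complex.sinh (-ν - a) / Complex.sinh (-ν - a - Complex.I * (ζ : ℂ)))) =
      σ * e * ((Real.sin ζ ^ 2 / Real.sin (2 * ζ) : ℝ) : ℂ) *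
        (Complex.sinh ν * Complex.sinh (ν + b)) /
        (Complex.sinh (ν - b) * Complex.sinh (ν + 2 * b)) := by
  have hS : Complex.sin (2 * (ζ : ℂ)) ≠ 0 := by exact_mod_cast hs2
  have e2 : e * e = 1 := by rcases he with h | h <;> simp [h]
  have t2 : τ * τ = 1 := by rcases hτ with h | h <;> simp [h]
  have s2 : σ * σ = 1 := by rcases hσ with h | h <;> simp [h]
  obtain ⟨m, hm⟩ : ∃ m, m = σ * e * τ := ⟨_, rfl⟩
  have hm1 : m = 1 ∨ m = -1 := by
    rcases he with h | h <;> rcases hτ with h' | h' <;> rcases hσ with h'' | h'' <;>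
      simp [hm, h, h', h'']
  have m2 : m * m = 1 := by rcases hm1 with h | h <;> simp [h]
  have hbm : b = m * (Complex.I * ζ) := by rw [hb, hm]; ring
  have n1 : ∀ x y : ℂ, Complex.sinh (-x - y) = -Complex.sinh (x + y) := by
    intro x y; rw [← Complex.sinh_neg]; congr 1; ring
  have hsb : Complex.sinh b = m * (Complex.I * Complex.sin ζ) := by
    rcases hm1 with h | h <;> rw [hbm, h] <;>
      simp [mul_comm Complex.I, Complex.sinh_mul_I]
  have hs2b : Complex.sinh (2 * b) = m * (Complex.I * Complex.sin (2 * ζ)) := by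
    have : 2 * b = m * ((2 * ζ : ℂ) * Complex.I) := by rw [hbm]; ring
    rw [this]
    rcases hm1 with h | h <;> rw [h] <;>
      simp [Complex.sinh_mul_I, mul_comm Complex.I]
  have ha1 : Complex.sinh a = e * Complex.sinh b := by simpa using hab 0
  have ha2 : Complex.sinh (2 * a) = Complex.sinh (2 * b) := by
    rw [two_mul, hab a, add_comm a b, hab b, ← mul_assoc, e2, one_mul, two_mul]
  have h3 : Complex.sinh (ν + a - Complex.I * ζ) = e * Complex.sinh (ν - Complex.I * ζ + b) := by
    rw [← hab]; congr 1; ring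
  have h4 : Complex.sinh (-ν - a - Complex.I * ζ) = -(e * Complex.sinh (ν + Complex.I * ζ + b)) := by
    rw [← hab, ← Complex.sinh_neg]; congr 1; ring
  have h5 : Complex.sinh (-ν - a) = -(e * Complex.sinh (ν + b)) := by
    rw [n1, hab]
  have P1 : Complex.sinh (ν - Complex.I * ζ) * Complex.sinh (ν + Complex.I * ζ)
      = Complex.sinh (ν - b) * Complex.sinh (ν + b) := by
    rcases hm1 with h | h <;> rw [hbm, h]
    · simp
    · simp only [neg_mul, one_mul, sub_neg_eq_add, ← sub_eq_add_neg]; ring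
  have P2 : Complex.sinh (ν - Complex.I * ζ + b) * Complex.sinh (ν + Complex.I * ζ + b)
      = Complex.sinh ν * Complex.sinh (ν + 2 * b) := by
    rcases hm1 with h | h <;> rw [hbm, h]
    · congr 2 <;> ring
    · rw [mul_comm]; congr 2 <;> ring
  have e0 : e ≠ 0 := by rintro rfl; simp at e2
  have m0 : m ≠ 0 := by rintro rfl; simp at m2
  rw [n1] at hd2
  rw [h3] at hd3
  rw [h4] at hd4
  have Q1 := mul_ne_zero hd1 (neg_ne_zero.mp hd2)
  have Q2 := mul_ne_zero (right_ne_zero_of_mul hd3) (right_ne_zero_of_mul (neg_ne_zero.mp hd4))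
  rw [P1] at Q1
  rw [P2] at Q2
  have q1 := left_ne_zero_of_mul Q1
  have q2 := right_ne_zero_of_mul Q1
  have q3 := left_ne_zero_of_mul Q2
  have q4 := right_ne_zero_of_mul Q2
  have A : Complex.sinh ν / Complex.sinh (ν - Complex.I * (ζ : ℂ)) *
          (Complex.sinh (-ν) / Complex.sinh (-ν - Complex.I * (ζ : ℂ)))
      = Complex.sinh ν ^ 2 / (Complex.sinh (ν - b) * Complex.sinh (ν + b)) := by
    rw [← P1, n1, Complex.sinh_neg, neg_div_neg_eq, div_mul_div_comm, sq]
  have B : Complex.sinh (ν + a) / Complex.sinh (ν + a - Complex.I * (ζ : ℂ)) *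
          (Complex.sinh (-ν - a) / Complex.sinh (-ν - a - Complex.I * (ζ : ℂ)))
      = Complex.sinh (ν + b) ^ 2 / (Complex.sinh ν * Complex.sinh (ν + 2 * b)) := by
    rw [← P2, h3, h4, h5, hab, neg_div_neg_eq, mul_div_mul_left _ _ e0, mul_div_mul_left _ _ e0,
      div_mul_div_comm, sq]
  have C : Complex.I * τ * (Complex.sinh (-a) ^ 2 / Complex.sinh (-(2 * a)))
      = σ * e * ((Real.sin ζ ^ 2 / Real.sin (2 * ζ) : ℝ) : ℂ) := by
    rw [Complex.sinh_neg, Complex.sinh_neg, ha1, ha2, hsb, hs2b]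
    push_cast
    have hI := Complex.I_ne_zero
    have : σ * e * m = τ := by rw [hm]; linear_combination e * e * τ * s2 + τ * e2
    rw [← this]
    field_simp
    have e2' : e ^ 2 = 1 := by rw [sq, e2]
    have m2' : m ^ 2 = 1 := by rw [sq, m2]
    simp [Complex.I_sq, e2', m2', mul_comm, mul_left_comm, mul_assoc]
  rw [A, B, C]
  field_simp

/-- Evaluation of the residue weight `w_α` in the reduction of the three-particle
sector integral: with `ζ_p = min(ζ, π-ζ)`, `s₂ = sgn(sin 2ζ)` and
`Φ(x) = sinh x / sinh(x - iζ)`, for `τ, σ = ±1` one has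
`iτ·(sinh²(-σiτζ_p)/sinh(-2σiτζ_p))·Φ(ν)Φ(-ν)·Φ(ν+σiτζ_p)Φ(-ν-σiτζ_p)
 = σ·s₂·(sin²ζ/sin 2ζ)·sinh(ν)sinh(ν+σis₂τζ)/(sinh(ν-σis₂τζ)·sinh(ν+2σis₂τζ))`. -/
theorem residue_weight_identity (ζ : ℝ) (hζ : ζ ∈ Set.Ioo 0 Real.pi)
    (hs2 : Real.sin (2 * ζ) ≠ 0)
    (ζp : ℝ) (hζp : ζp = min ζ (Real.pi - ζ))
    (s₂ : ℝ) (hs₂ : s₂ = Real.sign (Real.sin (2 * ζ)))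
    (Φ : ℂ → ℂ)
    (hΦ : ∀ x : ℂ, Φ x = Complex.sinh x / Complex.sinh (x - Complex.I * (ζ : ℂ)))
    (τ σ : ℝ) (hτ : τ = 1 ∨ τ = -1) (hσ : σ = 1 ∨ σ = -1) (ν : ℂ)
    (hd1 : Complex.sinh (ν - Complex.I * (ζ : ℂ)) ≠ 0)
    (hd2 : Complex.sinh (-ν - Complex.I * (ζ : ℂ)) ≠ 0)
    (hd3 : Complex.sinh (ν + (σ : ℂ) * Complex.I * (τ : ℂ) * (ζp : ℂ) -
      Complex.I * (ζ : ℂ)) ≠ 0)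
    (hd4 : Complex.sinh (-ν - (σ : ℂ) * Complex.I * (τ : ℂ) * (ζp : ℂ) -
      Complex.I * (ζ : ℂ)) ≠ 0)
    (hd5 : Complex.sinh (-(2 * (σ : ℂ) * Complex.I * (τ : ℂ) * (ζp : ℂ))) ≠ 0)
    (hd6 : Complex.sinh (ν - (σ : ℂ) * Complex.I * (s₂ : ℂ) * (τ : ℂ) * (ζ : ℂ)) ≠ 0)
    (hd7 : Complex.sinh (ν + 2 * (σ : ℂ) * Complex.I * (s₂ : ℂ) * (τ : ℂ) * (ζ : ℂ)) ≠ 0) :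
    Complex.I * (τ : ℂ) *
        (Complex.sinh (-((σ : ℂ) * Complex.I * (τ : ℂ) * (ζp : ℂ))) ^ 2 /
          Complex.sinh (-(2 * (σ : ℂ) * Complex.I * (τ : ℂ) * (ζp : ℂ)))) *
        (Φ ν * Φ (-ν)) *
        (Φ (ν + (σ : ℂ) * Complex.I * (τ : ℂ) * (ζp : ℂ)) *
          Φ (-ν - (σ : ℂ) * Complex.I * (τ : ℂ) * (ζp : ℂ))) =
      (σ : ℂ) * (s₂ : ℂ) * ((Real.sin ζ ^ 2 / Real.sin (2 * ζ) : ℝ) : ℂ) *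
        (Complex.sinh ν *
          Complex.sinh (ν + (σ : ℂ) * Complex.I * (s₂ : ℂ) * (τ : ℂ) * (ζ : ℂ))) /
        (Complex.sinh (ν - (σ : ℂ) * Complex.I * (s₂ : ℂ) * (τ : ℂ) * (ζ : ℂ)) *
          Complex.sinh (ν + 2 * (σ : ℂ) * Complex.I * (s₂ : ℂ) * (τ : ℂ) * (ζ : ℂ))) := by
  have hsn : (s₂ = 1 ∧ ζp = ζ) ∨ (s₂ = -1 ∧ ζp = Real.pi - ζ) := by
    obtain ⟨h0, h1⟩ := hζ
    rcases lt_trichotomy ζ (Real.pi / 2) with h | h | h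
    · left
      have : 0 < Real.sin (2 * ζ) := Real.sin_pos_of_pos_of_lt_pi (by linarith) (by linarith)
      exact ⟨by rw [hs₂, Real.sign_of_pos this], by rw [hζp, min_eq_left]; linarith⟩
    · exfalso; apply hs2; rw [h]; simp [mul_div_cancel₀]
    · right
      have : Real.sin (2 * ζ) < 0 := by
        rw [← Real.sin_sub_two_pi]
        exact Real.sin_neg_of_neg_of_neg_pi_lt (by linarith) (by linarith)
      exact ⟨by rw [hs₂, Real.sign_of_neg this], by rw [hζp, min_eq_right]; linarith⟩
  have hp : ∀ x : ℂ, Complex.sinh (x + Real.pi * Complex.I) = -Complex.sinh x := by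
    intro x; simp [Complex.sinh_add, Complex.sinh_mul_I, Complex.cosh_mul_I]
  have hp' : ∀ x : ℂ, Complex.sinh (x - Real.pi * Complex.I) = -Complex.sinh x := by
    intro x; simp [Complex.sinh_sub, Complex.sinh_mul_I, Complex.cosh_mul_I]
  have key := rw_aux ζ hs2 s₂ σ τ
    (by rcases hsn with h | h <;> simp [h.1]) (by rcases hτ with h | h <;> simp [h])
    (by rcases hσ with h | h <;> simp [h]) ν
    ((σ : ℂ) * Complex.I * (τ : ℂ) * (ζp : ℂ))
    ((σ : ℂ) * Complex.I * (s₂ : ℂ) * (τ : ℂ) * (ζ : ℂ)) rfl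
    (by
      intro x
      rcases hsn with ⟨h, h'⟩ | ⟨h, h'⟩
      · simp [h, h']
      · have hk : σ * τ = 1 ∨ σ * τ = -1 := by
          rcases hτ with h | h <;> rcases hσ with h' | h' <;> simp [h, h']
        have e1 : (σ : ℂ) * Complex.I * (τ : ℂ) * (ζp : ℂ)
          = ((σ * τ : ℝ) : ℂ) * (Complex.I * (Real.pi - ζ)) := by rw [h']; push_cast; ring
        have e2 : (σ : ℂ) * Complex.I * (s₂ : ℂ) * (τ : ℂ) * (ζ : ℂ)
          = -((σ * τ : ℝ) : ℂ) * (Complex.I * ζ) := by rw [h]; push_cast; ring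
        rw [e1, e2, h]
        rcases hk with hk | hk <;> rw [hk] <;> push_cast <;> rw [neg_one_mul (Complex.sinh _)]
        · rw [← hp]; congr 1; ring
        · rw [← hp']; congr 1; ring)
    hd1 hd2 hd3 hd4
  rw [hΦ, hΦ, hΦ, hΦ]
  convert key using 1
  · congr 5; ring_nf
  · congr 3; ring_nf
end
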